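/- Let (X_n, p_{n+1} : X_{n+1} → X_n)_{n ≥ 0} be a tower of fibrations of pointed topological spaces, with a chosen basepoint of lim_n X_n whose images give the basepoints of each X_n. Then for every k ≥ 0, the natural map P : π_k(lim_n X_n) → lim_n π_k X_n induced by the projections P_n : lim_n X_n → X_n is surjective. (π_k is a group for k ≥ 1 and a pointed set for k = 0; lim_n π_k X_n is the inverse limit of the tower of groups, respectively pointed sets, π_k X_n with structure maps (p_{n+1})_*.) -/

import Mathlib

open scoped unitInterval Topology Topology.Homotopy

noncomputable section

/-- A map is a *Serre fibration* if it has the homotopy lifting property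
with respect to all cubes `I^k`. -/
def IsSerreFibration {E B : Type} [TopologicalSpace E] [TopologicalSpace B]
    (p : C(E, B)) : Prop :=
  ∀ (k : ℕ) (f : C((Fin k → I), E)) (H : C(I × (Fin k → I), B)),
    (∀ q, H (0, q) = p (f q)) →
      ∃ G : C(I × (Fin k → I), E),
        (∀ q, G (0, q) = f q) ∧ ∀ z, p (G z) = H z

/-- The inverse limit of a tower of spaces. -/
def TowerLim (X : ℕ → Type) [∀ n, TopologicalSpace (X n)]
    (p : ∀ n, C(X (n + 1), X n)) : Type :=
  { z : ∀ n, X n // ∀ n, p n (z (n + 1)) = z n }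

instance {X : ℕ → Type} [∀ n, TopologicalSpace (X n)] (p : ∀ n, C(X (n + 1), X n)) :
    TopologicalSpace (TowerLim X p) :=
  instTopologicalSpaceSubtype

/-- The projection from the inverse limit of a tower to the `n`th space. -/
def TowerLim.proj {X : ℕ → Type} [∀ n, TopologicalSpace (X n)]
    {p : ∀ n, C(X (n + 1), X n)} (n : ℕ) : C(TowerLim X p, X n) :=
  ⟨fun z => z.1 n, (continuous_apply n).comp continuous_subtype_val⟩

/-- The map induced on homotopy groups (in particular on `π_k` for `N = Fin k`)
by a continuous map `f` with `f x = y`. -/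
def piMap {X Y : Type} [TopologicalSpace X] [TopologicalSpace Y] (N : Type)
    (f : C(X, Y)) {x : X} {y : Y} (hf : f x = y) :
    HomotopyGroup N X x → HomotopyGroup N Y y :=
  Quotient.map
    (fun g => (⟨f.comp g.1, fun q hq => by
        rw [ContinuousMap.comp_apply, g.2 q hq, hf]⟩ : GenLoop N Y y))
    (fun g h H => H.map fun F => F.compContinuousMap f)


/-- The map `π_k (lim_n X_n) → π_k (X n)` induced by the projection `TowerLim.proj n`,
for the basepoint `⟨x, hx⟩` of the inverse limit. -/
def piProjMap {X : ℕ → Type} [∀ n, TopologicalSpace (X n)] {p : ∀ n, C(X (n + 1), X n)}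
    (k : ℕ) {x : ∀ n, X n} (hx : ∀ n, p n (x (n + 1)) = x n) (n : ℕ) :
    HomotopyGroup (Fin k) (TowerLim X p) (⟨x, hx⟩ : TowerLim X p) →
      HomotopyGroup (Fin k) (X n) (x n) :=
  piMap (Fin k) (TowerLim.proj n) rfl

/-- The map `π_k (X (n+1)) → π_k (X n)` induced by the map `p n` of the tower. -/
def piTowerMap {X : ℕ → Type} [∀ n, TopologicalSpace (X n)] {p : ∀ n, C(X (n + 1), X n)}
    (k : ℕ) {x : ∀ n, X n} (hx : ∀ n, p n (x (n + 1)) = x n) (n : ℕ) :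
    HomotopyGroup (Fin k) (X (n + 1)) (x (n + 1)) → HomotopyGroup (Fin k) (X n) (x n) :=
  piMap (Fin k) (p n) (hx n)

/-- The distinguished basepoint of `HomotopyGroup N X x`: the class of the constant map. -/
def piConst {X : Type} [TopologicalSpace X] (N : Type) (x : X) : HomotopyGroup N X x :=
  ⟦GenLoop.const⟧

/-!
Along a Serre fibration `p`, a loop downstairs that represents `p_* β` lifts to a loop that
represents `β`: a homotopy rel `∂I^k` from `p ∘ h` to the given loop, where `h` represents `β`, can
be lifted with the lift prescribed on the box `0 × I^k ∪ I × ∂I^k`. Lifting recursively up the tower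
gives strictly compatible representatives of the `a n`, and these form a loop in the limit.

The lifting with prescribed values on the box uses the homotopy lifting property for `I × I^k`:
a homotopy moves a retraction of `I × I^k` onto the box back to the identity; the lift of this
homotopy is evaluated at each point at the moment the point has returned to its place. Points of
the box start in place, so there the lift takes the prescribed values.
-/

/-- The homotopy lifting property of `p` with respect to the single space `Y`. -/
def HasHomotopyLifting {E B : Type*} [TopologicalSpace E] [TopologicalSpace B] (p : C(E, B))
    (Y : Type*) [TopologicalSpace Y] : Prop :=
  ∀ (f : C(Y, E)) (H : C(I × Y, B)), (∀ y, H (0, y) = p (f y)) →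
    ∃ G : C(I × Y, E), (∀ y, G (0, y) = f y) ∧ ∀ z, p (G z) = H z

/-- A retraction `y ↦ path (0, y)` of `Y` onto `A` together with, for each `y`, a Moore path of
length `length y` from its image back to `y`, of length zero if `y ∈ A`. To make `path` total, it
is also defined beyond time `length y`, where its values do not matter. -/
structure MooreRetraction {Y : Type*} [TopologicalSpace Y] (A : Set Y) where
  length : C(Y, I)
  path : C(I × Y, Y)
  path_zero_mem : ∀ y, path (0, y) ∈ A
  path_length : ∀ y, path (length y, y) = y
  length_eq_zero : ∀ y ∈ A, length y = 0

section Lifting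

variable {E B Y Z : Type*} [TopologicalSpace E] [TopologicalSpace B] [TopologicalSpace Y]
  [TopologicalSpace Z] {p : C(E, B)}

lemma HasHomotopyLifting.of_leftInverse (hp : HasHomotopyLifting p Z) (i : C(Y, Z)) (r : C(Z, Y))
    (hri : Function.LeftInverse r i) : HasHomotopyLifting p Y := by
  intro f H hHf
  obtain ⟨G, hG₀, hG⟩ := hp (f.comp r) (H.comp ((ContinuousMap.id I).prodMap r))
    fun z => hHf (r z)
  refine ⟨G.comp ((ContinuousMap.id I).prodMap i), fun y => ?_, fun z => ?_⟩
  · exact (hG₀ (i y)).trans (congrArg f (hri y))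
  · exact (hG _).trans (congrArg H (Prod.ext rfl (hri z.2)))

lemma MooreRetraction.path_zero_of_mem {A : Set Y} (R : MooreRetraction A) {y : Y} (hy : y ∈ A) :
    R.path (0, y) = y := by
  simpa only [R.length_eq_zero y hy] using R.path_length y

theorem HasHomotopyLifting.exists_lift_of_mooreRetraction (hp : HasHomotopyLifting p Y) {A : Set Y}
    (R : MooreRetraction A) (f : C(A, E)) (H : C(Y, B)) (hHf : ∀ a : A, H a = p (f a)) :
    ∃ G : C(Y, E), (∀ a : A, G a = f a) ∧ ∀ y, p (G y) = H y := by
  let r : C(Y, A) := ⟨fun y => ⟨R.path (0, y), R.path_zero_mem y⟩, by fun_prop⟩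
  obtain ⟨G, hG₀, hG⟩ := hp (f.comp r) (H.comp R.path) fun y => hHf (r y)
  refine ⟨⟨fun y => G (R.length y, y), by fun_prop⟩, fun a => ?_, fun y => ?_⟩
  · calc G (R.length a, a) = G (0, a) := by rw [R.length_eq_zero a a.2]
      _ = f (r a) := hG₀ a
      _ = f a := congrArg f (Subtype.ext (R.path_zero_of_mem a.2))
  · exact (hG _).trans (congrArg H (R.path_length y))

end Lifting

lemma IsSerreFibration.hasHomotopyLifting_prod {E B : Type} [TopologicalSpace E]
    [TopologicalSpace B] {p : C(E, B)} (hp : IsSerreFibration p) (k : ℕ) :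
    HasHomotopyLifting p (I × (Fin k → I)) := by
  have hcube : HasHomotopyLifting p (Fin (k + 1) → I) := hp (k + 1)
  have hcons : Continuous fun z : I × (Fin k → I) => (Fin.cons z.1 z.2 : Fin (k + 1) → I) :=
    continuous_pi <| Fin.cases (by simpa using continuous_fst) fun j => by
      simp only [Fin.cons_succ]
      fun_prop
  exact hcube.of_leftInverse ⟨_, hcons⟩ ⟨fun y => (y 0, Fin.tail y), by unfold Fin.tail; fun_prop⟩
    fun _ => rfl

section Box

/-- The box `0 × I^N ∪ I × ∂I^N`: all faces of `I × I^N` except `1 × I^N`. -/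
def openBox (N : Type*) : Set (I × (N → I)) :=
  {z | z.1 = 0 ∨ z.2 ∈ Cube.boundary N}

variable {N : Type*}

/-- The map of `I × I^N` which lowers the first coordinate by `2 * τ` and expands the cube from its
centre by the factor `1 + 2 * τ`, clamping all coordinates to `I`. -/
def boxExpand (τ : ℝ) (z : I × (N → I)) : I × (N → I) :=
  (Set.projIcc 0 1 zero_le_one (z.1 - 2 * τ),
    fun i => Set.projIcc 0 1 zero_le_one (z.2 i + (2 * z.2 i - 1) * τ))

@[fun_prop]
lemma continuous_boxExpand {Y : Type*} [TopologicalSpace Y] {τ : Y → ℝ} {f : Y → I × (N → I)}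
    (hτ : Continuous τ) (hf : Continuous f) : Continuous fun y => boxExpand (τ y) (f y) := by
  refine (continuous_projIcc.comp ?_).prodMk
    (continuous_pi fun i => continuous_projIcc.comp ?_) <;> fun_prop

lemma boxExpand_zero (z : I × (N → I)) : boxExpand 0 z = z := by
  simp [boxExpand]

variable [Fintype N]

/-- The sup-norm distance from `q` to the centre of the cube `I^N`, scaled so that the boundary is
the sphere of radius `1`. -/
def cubeRadius (q : N → I) : ℝ :=
  ‖fun i => 2 * (q i : ℝ) - 1‖

@[fun_prop]
lemma continuous_cubeRadius : Continuous (cubeRadius (N := N)) := by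
  unfold cubeRadius
  fun_prop

lemma cubeRadius_nonneg (q : N → I) : 0 ≤ cubeRadius q :=
  norm_nonneg _

lemma cubeRadius_le_one (q : N → I) : cubeRadius q ≤ 1 := by
  refine (pi_norm_le_iff_of_nonneg zero_le_one).2 fun i => ?_
  rw [Real.norm_eq_abs, abs_le]
  constructor <;> linarith [(q i).2.1, (q i).2.2]

lemma cubeRadius_eq_one {q : N → I} (hq : q ∈ Cube.boundary N) : cubeRadius q = 1 := by
  obtain ⟨i, hi⟩ := hq
  refine le_antisymm (cubeRadius_le_one q) ?_
  calc (1 : ℝ) = ‖2 * (q i : ℝ) - 1‖ := by rcases hi with hi | hi <;> norm_num [hi]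
    _ ≤ cubeRadius q := norm_le_pi_norm (fun i => 2 * (q i : ℝ) - 1) i

lemma exists_cubeRadius_le_abs {q : N → I} (hq : 0 < cubeRadius q) :
    ∃ i, cubeRadius q ≤ |2 * (q i : ℝ) - 1| := by
  by_contra! h
  exact lt_irrefl _ ((pi_norm_lt_iff hq).2 h)

/-- A time `τ` at which `boxExpand τ z` lies in `openBox N`; it vanishes on `openBox N`. -/
def boxDepth : C(I × (N → I), I) where
  toFun z := min z.1 ⟨1 - cubeRadius z.2,
    by linarith [cubeRadius_le_one z.2], by linarith [cubeRadius_nonneg z.2]⟩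
  continuous_toFun := by fun_prop

lemma coe_boxDepth (z : I × (N → I)) : (boxDepth z : ℝ) = min (z.1 : ℝ) (1 - cubeRadius z.2) :=
  rfl

lemma boxDepth_eq_zero {z : I × (N → I)} (hz : z ∈ openBox N) : boxDepth z = 0 := by
  apply Subtype.ext
  rw [coe_boxDepth]
  rcases hz with hz | hz
  · simpa [hz] using cubeRadius_le_one z.2
  · simpa [cubeRadius_eq_one hz] using z.1.2.1

lemma boxExpand_snd_mem_boundary {z : I × (N → I)} {τ : ℝ}
    (h : 1 ≤ cubeRadius z.2 * (1 + 2 * τ)) : (boxExpand τ z).2 ∈ Cube.boundary N := by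
  have hfactor : 0 < 1 + 2 * τ :=
    pos_of_mul_pos_right (zero_lt_one.trans_le h) (cubeRadius_nonneg _)
  have hpos : 0 < cubeRadius z.2 := pos_of_mul_pos_left (zero_lt_one.trans_le h) hfactor.le
  obtain ⟨i, hi⟩ := exists_cubeRadius_le_abs hpos
  have hexp : 1 ≤ |2 * (z.2 i : ℝ) - 1| * (1 + 2 * τ) := h.trans (by gcongr)
  refine ⟨i, ?_⟩
  rcases abs_cases (2 * (z.2 i : ℝ) - 1) with ⟨habs, -⟩ | ⟨habs, -⟩ <;> rw [habs] at hexp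
  · exact .inr (projIcc_eq_one.2 (by linarith))
  · exact .inl (projIcc_eq_zero.2 (by linarith))

lemma boxExpand_boxDepth_mem (z : I × (N → I)) : boxExpand (boxDepth z) z ∈ openBox N := by
  rw [coe_boxDepth]
  rcases le_or_gt (z.1 : ℝ) (2 * (1 - cubeRadius z.2)) with hz | hz
  · have hdepth : (z.1 : ℝ) ≤ 2 * min (z.1 : ℝ) (1 - cubeRadius z.2) := by
      rw [mul_min_of_nonneg _ _ zero_le_two]
      exact le_min (by linarith [z.1.2.1]) hz
    exact .inl (projIcc_eq_zero.2 (by linarith))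
  · have hradius : 1 / 2 < cubeRadius z.2 := by linarith [z.1.2.2]
    have hle := cubeRadius_le_one z.2
    have hexpand : 1 ≤ cubeRadius z.2 * (1 + 2 * (1 - cubeRadius z.2)) := by
      have : 0 ≤ (1 - cubeRadius z.2) * (2 * cubeRadius z.2 - 1) :=
        mul_nonneg (by linarith) (by linarith)
      linarith
    rw [min_eq_right (by linarith)]
    exact .inr (boxExpand_snd_mem_boundary hexpand)

/-- The Moore retraction of `I × I^N` onto the box given by running `boxExpand` backwards. -/
def openBoxMooreRetraction : MooreRetraction (openBox N) where
  length := boxDepth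
  path := ⟨fun w => boxExpand (boxDepth w.2 - w.1) w.2, by fun_prop⟩
  path_zero_mem z := by simpa using boxExpand_boxDepth_mem z
  path_length z := by simp [boxExpand_zero]
  length_eq_zero _ := boxDepth_eq_zero

end Box

theorem HasHomotopyLifting.exists_homotopicRel_comp_eq {E B N : Type*} [TopologicalSpace E]
    [TopologicalSpace B] [Finite N] {p : C(E, B)} (hp : HasHomotopyLifting p (I × (N → I)))
    (f : C(N → I, E)) {g : C(N → I, B)} (hg : (p.comp f).HomotopicRel g (Cube.boundary N)) :
    ∃ f' : C(N → I, E), f.HomotopicRel f' (Cube.boundary N) ∧ p.comp f' = g := by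
  cases nonempty_fintype N
  obtain ⟨F⟩ := hg
  have hF : ∀ z : openBox N, F z = p (f z.1.2) := by
    rintro ⟨⟨t, q⟩, ht | hq⟩
    · obtain rfl : t = 0 := ht
      exact F.apply_zero q
    · exact F.eq_fst t hq
  obtain ⟨G, hGf, hG⟩ := hp.exists_lift_of_mooreRetraction openBoxMooreRetraction
    ((f.comp .snd).restrict (openBox N)) F.toContinuousMap hF
  refine ⟨⟨fun q => G (1, q), by fun_prop⟩, ⟨⟨⟨G, fun q => ?_, fun q => rfl⟩, fun t q hq => ?_⟩⟩,
    ?_⟩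
  · exact hGf ⟨(0, q), .inl rfl⟩
  · exact hGf ⟨(t, q), .inr hq⟩
  · ext q
    exact (hG (1, q)).trans (F.apply_one q)

lemma HasHomotopyLifting.exists_genLoop_lift {E B N : Type} [TopologicalSpace E]
    [TopologicalSpace B] [Finite N] {p : C(E, B)} (hp : HasHomotopyLifting p (I × (N → I)))
    {e : E} {b : B} (he : p e = b) (β : HomotopyGroup N E e) (g : Ω^ N B b)
    (hg : piMap N p he β = ⟦g⟧) :
    ∃ g' : Ω^ N E e, ⟦g'⟧ = β ∧ ∀ q, p (g' q) = g q := by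
  induction β using Quotient.inductionOn with
  | h h =>
    obtain ⟨f', hf', hpf'⟩ := hp.exists_homotopicRel_comp_eq h.1 (Quotient.exact hg)
    have hbase : ∀ q ∈ Cube.boundary N, f' q = e := fun q hq =>
      (hf'.some.fst_eq_snd hq).symm.trans (h.2 q hq)
    exact ⟨⟨f', hbase⟩, Quotient.sound hf'.symm, DFunLike.congr_fun hpf'⟩

section Tower

variable {X : ℕ → Type} [∀ n, TopologicalSpace (X n)] {p : ∀ n, C(X (n + 1), X n)}
  {x : ∀ n, X n} {N : Type}

/-- The loop in the limit of a tower given by a strictly compatible sequence of loops. -/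
def TowerLim.genLoop (hx : ∀ n, p n (x (n + 1)) = x n) (g : ∀ n, Ω^ N (X n) (x n))
    (hg : ∀ n q, p n (g (n + 1) q) = g n q) : Ω^ N (TowerLim X p) ⟨x, hx⟩ :=
  ⟨⟨fun q => ⟨fun n => g n q, fun n => hg n q⟩,
    Continuous.subtype_mk (continuous_pi fun n => (g n).1.continuous) _⟩,
    fun q hq => Subtype.ext (funext fun n => (g n).2 q hq)⟩

lemma piMap_proj_genLoop (hx : ∀ n, p n (x (n + 1)) = x n) (g : ∀ n, Ω^ N (X n) (x n))
    (hg : ∀ n q, p n (g (n + 1) q) = g n q) (n : ℕ) :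
    piMap N (TowerLim.proj n) rfl ⟦TowerLim.genLoop hx g hg⟧ = ⟦g n⟧ :=
  rfl

lemma exists_compatible_representatives [Finite N]
    (hp : ∀ n, HasHomotopyLifting (p n) (I × (N → I))) (hx : ∀ n, p n (x (n + 1)) = x n)
    (a : ∀ n, HomotopyGroup N (X n) (x n)) (ha : ∀ n, piMap N (p n) (hx n) (a (n + 1)) = a n) :
    ∃ g : ∀ n, Ω^ N (X n) (x n), (∀ n, ⟦g n⟧ = a n) ∧ ∀ n q, p n (g (n + 1) q) = g n q := by
  have hlift : ∀ n (g : {g : Ω^ N (X n) (x n) // ⟦g⟧ = a n}),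
      ∃ g' : {g' : Ω^ N (X (n + 1)) (x (n + 1)) // ⟦g'⟧ = a (n + 1)},
        ∀ q, p n (g'.1 q) = g.1 q := fun n ⟨g, hg⟩ =>
    let ⟨g', hg', hpg'⟩ := (hp n).exists_genLoop_lift (hx n) (a (n + 1)) g ((ha n).trans hg.symm)
    ⟨⟨g', hg'⟩, hpg'⟩
  choose lift hlift using hlift
  obtain ⟨g₀, hg₀⟩ := Quotient.exists_rep (a 0)
  let g : ∀ n, {g : Ω^ N (X n) (x n) // ⟦g⟧ = a n} := Nat.rec ⟨g₀, hg₀⟩ lift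
  exact ⟨fun n => (g n).1, fun n => (g n).2, fun n => hlift n (g n)⟩

end Tower

theorem pi_towerLim_to_lim_pi_surjective_general
    (X : ℕ → Type) [∀ n, TopologicalSpace (X n)] (p : ∀ n, C(X (n + 1), X n))
    (N : Type) [Finite N] (hp : ∀ n, HasHomotopyLifting (p n) (I × (N → I)))
    (x : ∀ n, X n) (hx : ∀ n, p n (x (n + 1)) = x n)
    (a : ∀ n, HomotopyGroup N (X n) (x n))
    (ha : ∀ n, piMap N (p n) (hx n) (a (n + 1)) = a n) :
    ∃ b : HomotopyGroup N (TowerLim X p) (⟨x, hx⟩ : TowerLim X p),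
      ∀ n, piMap N (TowerLim.proj n) rfl b = a n := by
  obtain ⟨g, hga, hg⟩ := exists_compatible_representatives hp hx a ha
  exact ⟨⟦TowerLim.genLoop hx g hg⟧, fun n => (piMap_proj_genLoop hx g hg n).trans (hga n)⟩

/-- **Surjectivity of `P` (Proposition 4.2 of the paper).**  Let `(X n, p n)` be a tower of
fibrations of pointed topological spaces, with basepoints the components `x n` of a chosen
point of the inverse limit.  For every `k ≥ 0`, the natural map
`P : π_k (lim_n X_n) → lim_n π_k X_n` induced by the projections `P_n` is surjective:
every family of elements `a n ∈ π_k (X n)` that is compatible (each `a (n+1)` is carried to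
`a n` by the map induced by `p n`) is the image under the maps induced by the projections
of a single element of `π_k` of the inverse limit.  (`π_k` is a group for `k ≥ 1` and a
pointed set for `k = 0`; surjectivity is a statement about the underlying sets.) -/
theorem pi_towerLim_to_lim_pi_surjective
    (X : ℕ → Type) [∀ n, TopologicalSpace (X n)] (p : ∀ n, C(X (n + 1), X n))
    (hfib : ∀ n, IsSerreFibration (p n))
    (x : ∀ n, X n) (hx : ∀ n, p n (x (n + 1)) = x n)
    (k : ℕ)
    (a : ∀ n, HomotopyGroup (Fin k) (X n) (x n))
    (ha : ∀ n, piTowerMap k hx n (a (n + 1)) = a n) :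
    ∃ b : HomotopyGroup (Fin k) (TowerLim X p) (⟨x, hx⟩ : TowerLim X p),
      ∀ n, piProjMap k hx n b = a n :=
  pi_towerLim_to_lim_pi_surjective_general X p (Fin k)
    (fun n => (hfib n).hasHomotopyLifting_prod k) x hx a ha

end
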